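/- Explicit form of the spectral density integrand (Lemma 4.6): let p ∈ {1,…,n}, let λ ∈ (a_p, a_{p+1}), let j, k ∈ {1,…,n} and x, x' ≥ 0, and set G := Im( (1/w(λ)) · F_{λ,j}^{−,j+1}(x) · F_{λ,k}^{−,j}(x') ). Then: (a) if j > p and k > p, G = Im(1/w(λ))·exp(−ξ'_j(λ)x − ξ'_k(λ)x'); (b) if j ≠ k and j, k ≤ p, G = Im(1/w(λ))·(cos(ξ_j(λ)x)cos(ξ_k(λ)x') − sin(ξ_j(λ)x)sin(ξ_k(λ)x')) − Re(1/w(λ))·(cos(ξ_j(λ)x)sin(ξ_k(λ)x') + sin(ξ_j(λ)x)cos(ξ_k(λ)x')); (b') if j = k ≤ p, G = Im(1/w(λ))·cos(ξ_j(λ)x)cos(ξ_j(λ)x') − Im(s_j(λ)/w(λ))·sin(ξ_j(λ)x)sin(ξ_j(λ)x') − Re(s_j(λ)/w(λ))·cos(ξ_j(λ)x)sin(ξ_j(λ)x') − Re(1/w(λ))·sin(ξ_j(λ)x)cos(ξ_j(λ)x'); (c) if j ≤ p < k, G = exp(−ξ'_k(λ)x')·( Im(1/w(λ))·cos(ξ_j(λ)x)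 − Re(1/w(λ))·sin(ξ_j(λ)x) ); (d) if k ≤ p < j, G = exp(−ξ'_j(λ)x)·( Im(1/w(λ))·cos(ξ_k(λ)x') − Re(1/w(λ))·sin(ξ_k(λ)x') ). -/

import Mathlib

noncomputable section

/-- `ξ_k(λ)`: for real `λ`, `ξ_k(λ) = √((λ−a_k)/c_k)` if `λ ≥ a_k` and
`ξ_k(λ) = −i·√((a_k−λ)/c_k)` if `λ < a_k`. -/
def xiR {m : ℕ} (a c : Fin (m + 2) → ℝ) (lam : ℝ) (k : Fin (m + 2)) : ℂ :=
  if a k ≤ lam then (Real.sqrt ((lam - a k) / c k) : ℂ)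
  else -Complex.I * (Real.sqrt ((a k - lam) / c k) : ℂ)

/-- The Wronskian `w(λ) = −i·Σ_k c_k·ξ_k(λ)`. -/
def wR {m : ℕ} (a c : Fin (m + 2) → ℝ) (lam : ℝ) : ℂ :=
  -Complex.I * ∑ k, (c k : ℂ) * xiR a c lam k

/-- `s_j(λ) = −(Σ_{l≠j} c_l·ξ_l(λ))/(c_j·ξ_j(λ))`. -/
def sR {m : ℕ} (a c : Fin (m + 2) → ℝ) (lam : ℝ) (j : Fin (m + 2)) : ℂ :=
  -(∑ l ∈ Finset.univ.erase j, (c l : ℂ) * xiR a c lam l) / ((c j : ℂ) * xiR a c lam j)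

/-- `FR a c lam j k x` is the `k`-th component `F_{λ,k}^{−,j}(x)` of the generalized
eigenfunction `F_λ^{−,j}`. -/
def FR {m : ℕ} (a c : Fin (m + 2) → ℝ) (lam : ℝ) (j k : Fin (m + 2)) (x : ℝ) : ℂ :=
  if k = j then
    Complex.cos (xiR a c lam j * x) -
      Complex.I * sR a c lam j * Complex.sin (xiR a c lam j * x)
  else Complex.exp (-Complex.I * xiR a c lam k * x)

end

/-!
Write `e_k(x) = exp(-i ξ_k x)`. Then `F_j^{-,j+1} = e_j`, and `F_k^{-,j} = e_k` for `k ≠ j`. On the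
diagonal, `1 - s_j = i w / (c_j ξ_j)` gives `F_j^{-,j}(x) = e_j(x) - (w / c_j) sin(ξ_j x) / ξ_j`.
When `λ < a_j`, both `e_j` and `sin(ξ_j x) / ξ_j` are real, so after division by `w` the correction
does not contribute to the imaginary part and `F_j^{-,j}` may be replaced by `e_j` there as well.
What remains is to split `e_k` into real and imaginary parts, a plane wave or a real exponential
according to the side of `a_k` on which `λ` lies.
-/

/-- The wave number `ξ_k(λ) = √((λ - a_k) / c_k)` of a branch with `a_k ≤ λ`, as a real number.
For `c_k > 0` its value is `0` when `λ < a_k`. -/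
noncomputable def waveNumber {m : ℕ} (a c : Fin (m + 2) → ℝ) (lam : ℝ) (k : Fin (m + 2)) : ℝ :=
  Real.sqrt ((lam - a k) / c k)

/-- The decay rate `ξ'_k(λ) = √((a_k - λ) / c_k)` of a branch with `λ < a_k`.
For `c_k > 0` its value is `0` when `a_k ≤ λ`. -/
noncomputable def decayRate {m : ℕ} (a c : Fin (m + 2) → ℝ) (lam : ℝ) (k : Fin (m + 2)) : ℝ :=
  Real.sqrt ((a k - lam) / c k)

/-- The wave `exp(-i ξ_k(λ) x)`, which is the component of `F_λ^{-,j}` on every branch `k ≠ j`. -/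
noncomputable def branchWave {m : ℕ} (a c : Fin (m + 2) → ℝ) (lam : ℝ) (k : Fin (m + 2))
    (x : ℝ) : ℂ :=
  Complex.exp (-Complex.I * xiR a c lam k * x)

/-- The spectral density integrand `G = Im((1 / w(λ)) F_{λ,j}^{-,j+1}(x) F_{λ,k}^{-,j}(x'))`. -/
noncomputable def spectralIntegrand {m : ℕ} (a c : Fin (m + 2) → ℝ) (lam : ℝ) (j k : Fin (m + 2))
    (x x' : ℝ) : ℝ :=
  ((1 / wR a c lam) * FR a c lam (j + 1) j x * FR a c lam j k x').im

lemma exp_neg_I_mul (z : ℂ) :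
    Complex.exp (-Complex.I * z) = Complex.cos z - Complex.sin z * Complex.I := by
  rw [neg_mul, mul_comm, ← neg_mul, Complex.exp_mul_I, Complex.cos_neg, Complex.sin_neg, neg_mul,
    sub_eq_add_neg]

lemma re_mul_exp_neg_I_mul_ofReal (z : ℂ) (θ : ℝ) :
    (z * Complex.exp (-Complex.I * θ)).re = z.re * Real.cos θ + z.im * Real.sin θ := by
  rw [exp_neg_I_mul, ← Complex.ofReal_cos, ← Complex.ofReal_sin]
  simp [-Complex.ofReal_cos, -Complex.ofReal_sin]

lemma im_mul_exp_neg_I_mul_ofReal (z : ℂ) (θ : ℝ) :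
    (z * Complex.exp (-Complex.I * θ)).im = z.im * Real.cos θ - z.re * Real.sin θ := by
  rw [exp_neg_I_mul, ← Complex.ofReal_cos, ← Complex.ofReal_sin]
  simp [-Complex.ofReal_cos, -Complex.ofReal_sin, neg_add_eq_sub]

section

variable {m : ℕ} {a c : Fin (m + 2) → ℝ} {lam : ℝ} {j k : Fin (m + 2)}

lemma decayRate_pos (hc : 0 < c k) (h : lam < a k) : 0 < decayRate a c lam k :=
  Real.sqrt_pos.2 (div_pos (sub_pos.2 h) hc)

lemma xiR_of_le (h : a k ≤ lam) : xiR a c lam k = waveNumber a c lam k :=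
  if_pos h

lemma xiR_of_lt (h : lam < a k) : xiR a c lam k = -Complex.I * decayRate a c lam k :=
  if_neg h.not_ge

lemma xiR_ne_zero_of_lt (hc : 0 < c k) (h : lam < a k) : xiR a c lam k ≠ 0 := by
  rw [xiR_of_lt h]
  exact mul_ne_zero (neg_ne_zero.2 Complex.I_ne_zero)
    (Complex.ofReal_ne_zero.2 (decayRate_pos hc h).ne')

lemma im_xiR_of_lt (h : lam < a k) : (xiR a c lam k).im = -decayRate a c lam k := by
  simp [xiR_of_lt h]

lemma im_xiR_nonpos : (xiR a c lam k).im ≤ 0 := by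
  rcases le_or_gt (a k) lam with h | h
  · simp [xiR_of_le h]
  · rw [im_xiR_of_lt h]
    exact neg_nonpos.2 (Real.sqrt_nonneg _)

lemma branchWave_of_le (h : a k ≤ lam) (x : ℝ) :
    branchWave a c lam k x = Complex.exp (-Complex.I * (waveNumber a c lam k * x : ℝ)) := by
  rw [branchWave, xiR_of_le h, Complex.ofReal_mul, mul_assoc]

lemma branchWave_of_lt (h : lam < a k) (x : ℝ) :
    branchWave a c lam k x = (Real.exp (-decayRate a c lam k * x) : ℝ) := by
  rw [branchWave, xiR_of_lt h]
  push_cast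
  congr 1
  linear_combination (decayRate a c lam k * x : ℂ) * Complex.I_mul_I

lemma sin_xiR_div_xiR_of_lt (h : lam < a k) (x : ℝ) :
    Complex.sin (xiR a c lam k * x) / xiR a c lam k =
      (Real.sinh (decayRate a c lam k * x) / decayRate a c lam k : ℝ) := by
  have hξx : xiR a c lam k * x = -((decayRate a c lam k * x : ℂ) * Complex.I) := by
    rw [xiR_of_lt h]; ring
  rw [hξx, Complex.sin_neg, Complex.sin_mul_I, xiR_of_lt h, mul_comm _ Complex.I, ← neg_mul,
    mul_div_mul_left _ _ (neg_ne_zero.2 Complex.I_ne_zero)]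
  push_cast
  rfl

lemma re_wR : (wR a c lam).re = ∑ k, c k * (xiR a c lam k).im := by
  simp [wR]

lemma re_wR_neg_of_lt (hc : ∀ k, 0 < c k) (h : lam < a j) : (wR a c lam).re < 0 := by
  rw [re_wR]
  refine Finset.sum_neg' (fun k _ => mul_nonpos_of_nonneg_of_nonpos (hc k).le im_xiR_nonpos)
    ⟨j, Finset.mem_univ j, mul_neg_of_pos_of_neg (hc j) ?_⟩
  rw [im_xiR_of_lt h]
  exact neg_neg_of_pos (decayRate_pos (hc j) h)

lemma wR_ne_zero_of_lt (hc : ∀ k, 0 < c k) (h : lam < a j) : wR a c lam ≠ 0 := fun hw =>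
  (re_wR_neg_of_lt hc h).ne (by rw [hw, Complex.zero_re])

lemma one_sub_sR (hc : c j ≠ 0) (hξ : xiR a c lam j ≠ 0) :
    1 - sR a c lam j = Complex.I * wR a c lam / (c j * xiR a c lam j) := by
  have hcξ : (c j : ℂ) * xiR a c lam j ≠ 0 := mul_ne_zero (Complex.ofReal_ne_zero.2 hc) hξ
  have hIw : Complex.I * wR a c lam = ∑ l, (c l : ℂ) * xiR a c lam l := by
    rw [wR, ← mul_assoc, mul_neg, Complex.I_mul_I, neg_neg, one_mul]
  rw [hIw, ← Finset.add_sum_erase _ _ (Finset.mem_univ j), add_div, div_self hcξ, sR, neg_div,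
    sub_neg_eq_add]

lemma FR_of_ne (h : k ≠ j) (x : ℝ) : FR a c lam j k x = branchWave a c lam k x :=
  if_neg h

lemma FR_add_one_self (x : ℝ) : FR a c lam (j + 1) j x = branchWave a c lam j x :=
  FR_of_ne (by simp) x

lemma FR_self (x : ℝ) :
    FR a c lam j j x = Complex.cos (xiR a c lam j * x) -
      Complex.I * sR a c lam j * Complex.sin (xiR a c lam j * x) :=
  if_pos rfl

lemma FR_self_eq_branchWave_sub (hc : c j ≠ 0) (hξ : xiR a c lam j ≠ 0) (x : ℝ) :
    FR a c lam j j x = branchWave a c lam j x -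
      wR a c lam * ((Complex.sin (xiR a c lam j * x) / xiR a c lam j) / c j) := by
  rw [FR_self, branchWave, mul_assoc (-Complex.I), exp_neg_I_mul]
  linear_combination Complex.I * Complex.sin (xiR a c lam j * x) * one_sub_sR hc hξ +
    wR a c lam * Complex.sin (xiR a c lam j * x) / (c j * xiR a c lam j) * Complex.I_mul_I

lemma spectralIntegrand_of_ne (h : j ≠ k) (x x' : ℝ) :
    spectralIntegrand a c lam j k x x' =
      ((1 / wR a c lam) * branchWave a c lam j x * branchWave a c lam k x').im := by
  rw [spectralIntegrand, FR_add_one_self, FR_of_ne h.symm]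

lemma spectralIntegrand_self_of_lt (hc : ∀ k, 0 < c k) (h : lam < a j) (x x' : ℝ) :
    spectralIntegrand a c lam j j x x' =
      ((1 / wR a c lam) * branchWave a c lam j x * branchWave a c lam j x').im := by
  set r : ℝ := Real.exp (-decayRate a c lam j * x) *
    (Real.sinh (decayRate a c lam j * x') / decayRate a c lam j / c j)
  have hcorrection : (1 / wR a c lam) * branchWave a c lam j x * FR a c lam j j x' =
      (1 / wR a c lam) * branchWave a c lam j x * branchWave a c lam j x' - (r : ℂ) := by
    have hw := wR_ne_zero_of_lt hc h
    rw [FR_self_eq_branchWave_sub (hc j).ne' (xiR_ne_zero_of_lt (hc j) h),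
      sin_xiR_div_xiR_of_lt h, branchWave_of_lt h x, Complex.ofReal_mul, Complex.ofReal_div _ (c j)]
    field_simp
  rw [spectralIntegrand, FR_add_one_self, hcorrection, Complex.sub_im, Complex.ofReal_im, sub_zero]

lemma spectralIntegrand_of_lt_of_lt (hc : ∀ k, 0 < c k) (hj : lam < a j) (hk : lam < a k)
    (x x' : ℝ) :
    spectralIntegrand a c lam j k x x' = (1 / wR a c lam).im *
      Real.exp (-decayRate a c lam j * x - decayRate a c lam k * x') := by
  have hwaves : spectralIntegrand a c lam j k x x' =
      ((1 / wR a c lam) * branchWave a c lam j x * branchWave a c lam k x').im := by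
    rcases eq_or_ne j k with rfl | hjk
    · exact spectralIntegrand_self_of_lt hc hj x x'
    · exact spectralIntegrand_of_ne hjk x x'
  rw [hwaves, branchWave_of_lt hj, branchWave_of_lt hk, Complex.im_mul_ofReal,
    Complex.im_mul_ofReal, mul_assoc, ← Real.exp_add, neg_mul _ x', ← sub_eq_add_neg]

lemma spectralIntegrand_of_ne_of_le_of_le (hjk : j ≠ k) (hj : a j ≤ lam) (hk : a k ≤ lam)
    (x x' : ℝ) :
    spectralIntegrand a c lam j k x x' =
      (1 / wR a c lam).im * Real.cos (waveNumber a c lam j * x + waveNumber a c lam k * x') -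
        (1 / wR a c lam).re * Real.sin (waveNumber a c lam j * x + waveNumber a c lam k * x') := by
  rw [spectralIntegrand_of_ne hjk, branchWave_of_le hj, branchWave_of_le hk, mul_assoc,
    ← Complex.exp_add, ← mul_add, ← Complex.ofReal_add, im_mul_exp_neg_I_mul_ofReal]

lemma spectralIntegrand_self_of_le (hj : a j ≤ lam) (x x' : ℝ) :
    spectralIntegrand a c lam j j x x' =
      ((1 / wR a c lam).im * Real.cos (waveNumber a c lam j * x) -
          (1 / wR a c lam).re * Real.sin (waveNumber a c lam j * x)) *
        Real.cos (waveNumber a c lam j * x') -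
      ((sR a c lam j / wR a c lam).re * Real.cos (waveNumber a c lam j * x) +
          (sR a c lam j / wR a c lam).im * Real.sin (waveNumber a c lam j * x)) *
        Real.sin (waveNumber a c lam j * x') := by
  have hexpand : (1 / wR a c lam) * branchWave a c lam j x * FR a c lam j j x' =
      (1 / wR a c lam) * branchWave a c lam j x * (Real.cos (waveNumber a c lam j * x') : ℝ) -
        Complex.I * ((sR a c lam j / wR a c lam) * branchWave a c lam j x) *
          (Real.sin (waveNumber a c lam j * x') : ℝ) := by
    rw [FR_self, xiR_of_le hj]
    push_cast
    ring
  rw [spectralIntegrand, FR_add_one_self, hexpand, Complex.sub_im, Complex.im_mul_ofReal,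
    Complex.im_mul_ofReal, Complex.I_mul_im, branchWave_of_le hj, im_mul_exp_neg_I_mul_ofReal,
    re_mul_exp_neg_I_mul_ofReal]

lemma spectralIntegrand_of_le_of_lt (hj : a j ≤ lam) (hk : lam < a k) (x x' : ℝ) :
    spectralIntegrand a c lam j k x x' = Real.exp (-decayRate a c lam k * x') *
      ((1 / wR a c lam).im * Real.cos (waveNumber a c lam j * x) -
        (1 / wR a c lam).re * Real.sin (waveNumber a c lam j * x)) := by
  have hjk : j ≠ k := by rintro rfl; exact hj.not_gt hk
  rw [spectralIntegrand_of_ne hjk, branchWave_of_le hj, branchWave_of_lt hk, Complex.im_mul_ofReal,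
    im_mul_exp_neg_I_mul_ofReal, mul_comm]

lemma spectralIntegrand_of_lt_of_le (hj : lam < a j) (hk : a k ≤ lam) (x x' : ℝ) :
    spectralIntegrand a c lam j k x x' = Real.exp (-decayRate a c lam j * x) *
      ((1 / wR a c lam).im * Real.cos (waveNumber a c lam k * x') -
        (1 / wR a c lam).re * Real.sin (waveNumber a c lam k * x')) := by
  have hjk : j ≠ k := by rintro rfl; exact hk.not_gt hj
  rw [spectralIntegrand_of_ne hjk, branchWave_of_lt hj, branchWave_of_le hk, mul_right_comm,
    Complex.im_mul_ofReal, im_mul_exp_neg_I_mul_ofReal, mul_comm]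

end

theorem statement11_general {m : ℕ} {a c : Fin (m + 2) → ℝ} (hc : ∀ k, 0 < c k) (lam : ℝ)
    (j k : Fin (m + 2)) (x x' : ℝ) :
    (lam < a j → lam < a k →
      spectralIntegrand a c lam j k x x' = (1 / wR a c lam).im *
        Real.exp (-decayRate a c lam j * x - decayRate a c lam k * x')) ∧
    (j ≠ k → a j < lam → a k < lam →
      spectralIntegrand a c lam j k x x' =
        (1 / wR a c lam).im *
            (Real.cos (waveNumber a c lam j * x) * Real.cos (waveNumber a c lam k * x') -
              Real.sin (waveNumber a c lam j * x) * Real.sin (waveNumber a c lam k * x')) -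
          (1 / wR a c lam).re *
            (Real.cos (waveNumber a c lam j * x) * Real.sin (waveNumber a c lam k * x') +
              Real.sin (waveNumber a c lam j * x) * Real.cos (waveNumber a c lam k * x'))) ∧
    (j = k → a j < lam →
      spectralIntegrand a c lam j k x x' =
        (1 / wR a c lam).im *
            (Real.cos (waveNumber a c lam j * x) * Real.cos (waveNumber a c lam j * x')) -
          (sR a c lam j / wR a c lam).im *
            (Real.sin (waveNumber a c lam j * x) * Real.sin (waveNumber a c lam j * x')) -
          (sR a c lam j / wR a c lam).re *
            (Real.cos (waveNumber a c lam j * x) * Real.sin (waveNumber a c lam j * x')) -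
          (1 / wR a c lam).re *
            (Real.sin (waveNumber a c lam j * x) * Real.cos (waveNumber a c lam j * x'))) ∧
    (a j ≤ lam → lam < a k →
      spectralIntegrand a c lam j k x x' = Real.exp (-decayRate a c lam k * x') *
        ((1 / wR a c lam).im * Real.cos (waveNumber a c lam j * x) -
          (1 / wR a c lam).re * Real.sin (waveNumber a c lam j * x))) ∧
    (a k ≤ lam → lam < a j →
      spectralIntegrand a c lam j k x x' = Real.exp (-decayRate a c lam j * x) *
        ((1 / wR a c lam).im * Real.cos (waveNumber a c lam k * x') -
          (1 / wR a c lam).re * Real.sin (waveNumber a c lam k * x'))) := by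
  refine ⟨fun hj hk => spectralIntegrand_of_lt_of_lt hc hj hk x x', fun hjk hj hk => ?_, ?_,
    fun hj hk => spectralIntegrand_of_le_of_lt hj hk x x',
    fun hk hj => spectralIntegrand_of_lt_of_le hj hk x x'⟩
  · rw [spectralIntegrand_of_ne_of_le_of_le hjk hj.le hk.le, Real.cos_add, Real.sin_add]
    ring
  · rintro rfl hj
    rw [spectralIntegrand_self_of_le hj.le]
    ring

/-- Lemma 4.6, explicit form of the spectral density integrand: let
`λ ∈ (a_p, a_{p+1})` (with `a_{n+1} = +∞`, encoded by `a p < λ` and `λ < a k` for all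
`k > p`), let `j, k` be branch indices and `x, x' ≥ 0`, and set
`G = Im((1/w(λ))·F_{λ,j}^{−,j+1}(x)·F_{λ,k}^{−,j}(x'))`. Then `G` is given by the
explicit case formulas (a), (b), (b'), (c), (d), where `ξ_k(λ) = √((λ−a_k)/c_k)` is real
for `k ≤ p` and `ξ'_k(λ) = √((a_k−λ)/c_k)` for `k > p`. -/
theorem statement11 (m : ℕ) (a c : Fin (m + 2) → ℝ) (ha : Monotone a) (hc : ∀ k, 0 < c k)
    (p : Fin (m + 2)) (lam : ℝ) (hp1 : a p < lam) (hp2 : ∀ k, p < k → lam < a k)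
    (j k : Fin (m + 2)) (x x' : ℝ) (hx : 0 ≤ x) (hx' : 0 ≤ x') :
    -- case (a): `j > p` and `k > p`
    (p < j → p < k →
      ((1 / wR a c lam) * FR a c lam (j + 1) j x * FR a c lam j k x').im =
        (1 / wR a c lam).im *
          Real.exp (-(Real.sqrt ((a j - lam) / c j)) * x - Real.sqrt ((a k - lam) / c k) * x')) ∧
    -- case (b): `j ≠ k`, `j ≤ p`, `k ≤ p`
    (j ≠ k → j ≤ p → k ≤ p →
      ((1 / wR a c lam) * FR a c lam (j + 1) j x * FR a c lam j k x').im =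
        (1 / wR a c lam).im *
            (Real.cos (Real.sqrt ((lam - a j) / c j) * x) *
                Real.cos (Real.sqrt ((lam - a k) / c k) * x') -
              Real.sin (Real.sqrt ((lam - a j) / c j) * x) *
                Real.sin (Real.sqrt ((lam - a k) / c k) * x')) -
          (1 / wR a c lam).re *
            (Real.cos (Real.sqrt ((lam - a j) / c j) * x) *
                Real.sin (Real.sqrt ((lam - a k) / c k) * x') +
              Real.sin (Real.sqrt ((lam - a j) / c j) * x) *
                Real.cos (Real.sqrt ((lam - a k) / c k) * x'))) ∧
    -- case (b'): `j = k ≤ p`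
    (j = k → j ≤ p →
      ((1 / wR a c lam) * FR a c lam (j + 1) j x * FR a c lam j k x').im =
        (1 / wR a c lam).im *
            (Real.cos (Real.sqrt ((lam - a j) / c j) * x) *
              Real.cos (Real.sqrt ((lam - a j) / c j) * x')) -
          (sR a c lam j / wR a c lam).im *
            (Real.sin (Real.sqrt ((lam - a j) / c j) * x) *
              Real.sin (Real.sqrt ((lam - a j) / c j) * x')) -
          (sR a c lam j / wR a c lam).re *
            (Real.cos (Real.sqrt ((lam - a j) / c j) * x) *
              Real.sin (Real.sqrt ((lam - a j) / c j) * x')) -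
          (1 / wR a c lam).re *
            (Real.sin (Real.sqrt ((lam - a j) / c j) * x) *
              Real.cos (Real.sqrt ((lam - a j) / c j) * x'))) ∧
    -- case (c): `j ≤ p < k`
    (j ≤ p → p < k →
      ((1 / wR a c lam) * FR a c lam (j + 1) j x * FR a c lam j k x').im =
        Real.exp (-(Real.sqrt ((a k - lam) / c k)) * x') *
          ((1 / wR a c lam).im * Real.cos (Real.sqrt ((lam - a j) / c j) * x) -
            (1 / wR a c lam).re * Real.sin (Real.sqrt ((lam - a j) / c j) * x))) ∧
    -- case (d): `k ≤ p < j`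
    (k ≤ p → p < j →
      ((1 / wR a c lam) * FR a c lam (j + 1) j x * FR a c lam j k x').im =
        Real.exp (-(Real.sqrt ((a j - lam) / c j)) * x) *
          ((1 / wR a c lam).im * Real.cos (Real.sqrt ((lam - a k) / c k) * x') -
            (1 / wR a c lam).re * Real.sin (Real.sqrt ((lam - a k) / c k) * x'))) := by
  have hbelow : ∀ l ≤ p, a l < lam := fun l hl => (ha hl).trans_lt hp1
  obtain ⟨hA, hB, hB', hC, hD⟩ := statement11_general (a := a) hc lam j k x x'
  exact ⟨fun hj hk => hA (hp2 j hj) (hp2 k hk), fun hjk hj hk => hB hjk (hbelow j hj) (hbelow k hk),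
    fun hjk hj => hB' hjk (hbelow j hj), fun hj hk => hC (hbelow j hj).le (hp2 k hk),
    fun hk hj => hD (hbelow k hk).le (hp2 j hj)⟩
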